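/- For all integers k >= 0, j >= 0, m >= 1, setting n = 2m + kj, and for all rationals t_1, ..., t_m: \sum_{P \in P_{n,k}^{m,j}} \prod_{i=1}^{m} t_i^{\alpha_i(P)} = (1/(m+1)) * C(m+j, m) * \sum_{r=0}^{m} C(m+j+1, r) * (r!/m!) * B_{m,r}(1!t_1, 2!t_2, ...). -/

import Mathlib

open Finset

inductive Step : Type
  | u | d | h
deriving DecidableEq

/-- Lengths of maximal blocks of letters with `wt s ≠ none`, weighted by `wt`. -/
def runs (wt : Step → Option ℕ) : List Step → List ℕ
  | [] => []
  | s :: l =>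
    match wt s, runs wt l with
    | none, r => r
    | some n, r =>
      match l with
      | [] => [n]
      | s' :: _ =>
        match wt s' with
        | none => n :: r
        | some _ =>
          match r with
          | a :: rest => (n + a) :: rest
          | [] => [n]

def uRuns : List Step → List ℕ :=
  runs (fun s => match s with | Step.u => some 1 | _ => none)

def uhRuns (k : ℕ) : List Step → List ℕ :=
  runs (fun s => match s with | Step.u => some 1 | Step.h => some k | Step.d => none)

def alpha (i : ℕ) (w : List Step) : ℕ := (uRuns w).count i

def beta (i : ℕ) (w : List Step) : ℕ := (uRuns w).tail.count i

def IsNonneg (w : List Step) : Prop :=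
  ∀ i : ℕ, (w.take i).count Step.d ≤ (w.take i).count Step.u

def pathSet (m j : ℕ) : Set (List Step) :=
  {w | w.count Step.u = m ∧ w.count Step.d = m ∧ w.count Step.h = j ∧ IsNonneg w}

/-- no horizontal step lies on the x-axis -/
def NoLowH (w : List Step) : Prop :=
  ∀ (i : ℕ) (hi : i < w.length), w[i]'hi = Step.h →
    (w.take i).count Step.u ≠ (w.take i).count Step.d

def qSet (m j : ℕ) : Set (List Step) :=
  {w | w ∈ pathSet m j ∧ NoLowH w}

/-- normalized partial Bell polynomial (r!/m!) B_{m,r}(1!t₁,2!t₂,…) -/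
def bellNorm (m r : ℕ) (t : ℕ → ℚ) : ℚ :=
  ∑ f : Fin m → Fin (m + 1),
    if (∑ i : Fin m, (f i : ℕ)) = r ∧ (∑ i : Fin m, ((i : ℕ) + 1) * (f i : ℕ)) = m then
      (r.factorial : ℚ) / (∏ i : Fin m, ((f i : ℕ).factorial : ℚ)) * ∏ i : Fin m, t ((i : ℕ) + 1) ^ (f i : ℕ)
    else 0

/-- normalized potential polynomial  P_p^{(lam)}(1!t₁,2!t₂,…)/p! -/
def potential (lam p : ℕ) (t : ℕ → ℚ) : ℚ :=
  ∑ r ∈ Finset.range (p + 1), (Nat.choose lam r : ℚ) * bellNorm p r t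



section helpers
open PowerSeries

theorem xderiv_aux {R : Type*} [CommRing R] (ψ : R⟦X⟧) (N c : ℕ) :
    ((N : R) + 1) * ∑ p ∈ antidiagonal c, coeff p.1 ψ * (p.2 * coeff p.2 (ψ ^ N)) =
      N * (c * coeff c (ψ ^ (N + 1))) := by
  have key : ∀ f : R⟦X⟧, ∀ n : ℕ, coeff n (X * PowerSeries.derivative R f) = n * coeff n f := by
    intro f n
    cases n with
    | zero => simp
    | succ n => rw [coeff_succ_X_mul, PowerSeries.coeff_derivative]; push_cast; ring
  have h1 : ∑ p ∈ antidiagonal c, coeff p.1 ψ * (p.2 * coeff p.2 (ψ ^ N)) =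
      coeff c (ψ * (X * PowerSeries.derivative R (ψ ^ N))) := by
    rw [coeff_mul]; simp only [key]
  have h2 : ((N + 1 : ℕ) : R⟦X⟧) * (ψ * (X * PowerSeries.derivative R (ψ ^ N))) =
      (N : R⟦X⟧) * (X * PowerSeries.derivative R (ψ ^ (N + 1))) := by
    rw [Derivation.leibniz_pow, Derivation.leibniz_pow]
    cases N with
    | zero => simp
    | succ n => simp only [smul_eq_mul, nsmul_eq_mul, Nat.add_sub_cancel]; push_cast; ring
  have h3 := congrArg (coeff c) h2
  rw [← map_natCast (C (R := R)), ← map_natCast (C (R := R)), coeff_C_mul, coeff_C_mul, key] at h3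
  rw [h1]
  exact_mod_cast h3

theorem cycle_aux {R : Type*} [CommRing R] [IsDomain R] [CharZero R] (ψ : R⟦X⟧) (W : ℕ → ℕ → R)
    (hv : ∀ N q, N < q → W N q = 0) (h00 : W 0 0 = 1)
    (h0 : ∀ N, W (N + 1) 0 = 0)
    (hs : ∀ N q, W (N + 1) (q + 1) = ∑ b ∈ range (N + 1), coeff b ψ * W N (q + b)) :
    ∀ N q c : ℕ, q + c = N → (N : R) * W N q = q * coeff c (ψ ^ N) := by
  intro N
  induction N with
  | zero =>
    intro q c h
    obtain rfl : q = 0 := by omega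
    simp
  | succ N ih =>
    intro q c h
    cases q with
    | zero => simp [h0]
    | succ q =>
      have hW : W (N + 1) (q + 1) = ∑ p ∈ antidiagonal c, coeff p.1 ψ * W N (q + p.1) := by
        rw [hs, Finset.Nat.sum_antidiagonal_eq_sum_range_succ (fun a _ => coeff a ψ * W N (q + a))]
        symm
        apply Finset.sum_subset
        · intro a; simp; omega
        · intro a ha hb
          rw [hv _ _ (by simp at ha hb; omega), mul_zero]
      rcases Nat.eq_zero_or_pos N with rfl | hN
      · rw [hW]
        rcases Nat.eq_zero_or_pos q with rfl | hq
        · obtain rfl : c = 0 := by omega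
          simp [h00]
        · omega
      · have hN' : (N : R) ≠ 0 := by exact_mod_cast hN.ne'
        apply mul_left_cancel₀ hN'
        have hx := xderiv_aux ψ N c
        have : (N : R) * W (N + 1) (q + 1) = N * coeff c (ψ ^ (N + 1)) -
            ∑ p ∈ antidiagonal c, coeff p.1 ψ * (p.2 * coeff p.2 (ψ ^ N)) := by
          rw [hW, pow_succ', coeff_mul, Finset.mul_sum, Finset.mul_sum, ← Finset.sum_sub_distrib]
          apply Finset.sum_congr rfl
          intro p hp
          rw [HasAntidiagonal.mem_antidiagonal] at hp
          have e := ih (q + p.1) p.2 (by omega)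
          have e2 : ((q + p.1 : ℕ) : R) = N - p.2 := by
            rw [eq_sub_iff_add_eq]; norm_cast; omega
          rw [e2] at e
          linear_combination (coeff p.1 ψ) * e
        have e3 : ((q + 1 : ℕ) : R) = N + 1 - c := by
          rw [eq_sub_iff_add_eq]; norm_cast
        rw [e3]
        push_cast
        linear_combination ((N : R) + 1) * this - hx

/-- first passage words -/
def FPw : ℕ → ℕ → Finset (List Step)
  | 0, 0 => {[]}
  | 0, _ + 1 => ∅
  | _ + 1, 0 => ∅
  | N + 1, q + 1 =>
    (range (N + 1)).biUnion (fun a => (FPw N (q + a)).image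
      (fun w => List.replicate a Step.u ++ Step.d :: w)) ∪
    (range N).biUnion (fun a => (FPw N (q + 1 + a)).image
      (fun w => List.replicate a Step.u ++ Step.h :: w))

def Gw : ℕ → ℕ → List Step → Prop
  | N, q, [] => N = 0 ∧ q = 0
  | _, 0, _ :: _ => False
  | N, q + 1, Step.u :: w => Gw N (q + 2) w
  | 0, _ + 1, Step.d :: _ => False
  | 0, _ + 1, Step.h :: _ => False
  | N + 1, q + 1, Step.d :: w => Gw N q w
  | N + 1, q + 1, Step.h :: w => Gw N (q + 1) w

theorem Gw_le : ∀ (w : List Step) (N q : ℕ), Gw N q w → q ≤ N := by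
  intro w
  induction w with
  | nil => intro N q h; simp only [Gw] at h; omega
  | cons s w ih =>
    intro N q h
    cases q with
    | zero => omega
    | succ q =>
      cases s <;> cases N <;> simp only [Gw] at h <;> have := ih _ _ h <;> omega

theorem Gw_rep (N q a : ℕ) (w : List Step) :
    Gw N (q + 1) (List.replicate a Step.u ++ w) ↔ Gw N (q + 1 + a) w := by
  induction a generalizing q with
  | zero => simp
  | succ a ih =>
    rw [List.replicate_succ, List.cons_append]
    simp only [Gw]
    rw [ih, show q + 1 + 1 + a = q + 1 + (a + 1) by ring]

theorem word_dec (w : List Step) : ∃ a, w = List.replicate a Step.u ∨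
    (∃ w', w = List.replicate a Step.u ++ Step.d :: w') ∨
    (∃ w', w = List.replicate a Step.u ++ Step.h :: w') := by
  induction w with
  | nil => exact ⟨0, by simp⟩
  | cons s w ih =>
    cases s with
    | u =>
      obtain ⟨a, h⟩ := ih
      refine ⟨a + 1, ?_⟩
      simpa [List.replicate_succ] using h
    | d => exact ⟨0, by simp⟩
    | h => exact ⟨0, by simp⟩

theorem mem_FPw (N q : ℕ) (w : List Step) : w ∈ FPw N q ↔ Gw N q w := by
  induction N generalizing q w with
  | zero =>
    constructor
    · cases q <;> simp [FPw]
      rintro rfl; simp [Gw]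
    · intro h
      obtain rfl : q = 0 := by have := Gw_le _ _ _ h; omega
      cases w with
      | nil => simp [FPw]
      | cons s w => simp [Gw] at h
  | succ N ih =>
    cases q with
    | zero =>
      cases w <;> simp [FPw, Gw]
    | succ q =>
      simp only [FPw, mem_union, mem_biUnion, mem_range, mem_image, ih]
      constructor
      · rintro (⟨a, ha, w', hw, rfl⟩ | ⟨a, ha, w', hw, rfl⟩)
        · rw [Gw_rep, show q + 1 + a = q + a + 1 by ring]
          simpa only [Gw] using hw
        · rw [Gw_rep, show q + 1 + a = q + a + 1 by ring]
          simp only [Gw]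
          rwa [show q + a + 1 = q + 1 + a by ring]
      · intro h
        obtain ⟨a, rfl | ⟨w', rfl⟩ | ⟨w', rfl⟩⟩ := word_dec w
        · rw [← List.append_nil (List.replicate a Step.u), Gw_rep] at h
          simp [Gw] at h
        · left
          rw [Gw_rep, show q + 1 + a = q + a + 1 by ring] at h
          simp only [Gw] at h
          exact ⟨a, by have := Gw_le _ _ _ h; omega, w', h, rfl⟩
        · right
          rw [Gw_rep, show q + 1 + a = q + a + 1 by ring] at h
          simp only [Gw] at h
          exact ⟨a, by have := Gw_le _ _ _ h; omega, w',
            by rwa [show q + 1 + a = q + a + 1 by ring], rfl⟩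

theorem Gw_last : ∀ (w : List Step) (N q : ℕ), Gw N q w → w ≠ [] → ∃ w', w = w' ++ [Step.d] := by
  intro w
  induction w with
  | nil => intro N q h h'; exact absurd rfl h'
  | cons s w ih =>
    intro N q h _
    by_cases hw : w = []
    · subst hw
      refine ⟨[], ?_⟩
      cases s <;> cases q <;> cases N <;> simp [Gw] at h ⊢
    · have : ∃ N q, Gw N q w := by
        cases s <;> cases q <;> cases N <;> simp only [Gw] at h <;> exact ⟨_, _, h⟩
      obtain ⟨N, q, h⟩ := this
      obtain ⟨w', rfl⟩ := ih N q h hw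
      exact ⟨s :: w', rfl⟩

theorem all_take_cons (s : Step) (w : List Step) (P : List Step → Prop) :
    (∀ i, P ((s :: w).take i)) ↔ P [] ∧ ∀ i, P (s :: w.take i) := by
  constructor
  · intro h
    exact ⟨by simpa using h 0, fun i => by simpa using h (i + 1)⟩
  · rintro ⟨h0, h⟩ i
    cases i with
    | zero => simpa using h0
    | succ i => simpa using h i

theorem Gw_append (w : List Step) : ∀ N q : ℕ, Gw (N + 1) (q + 1) (w ++ [Step.d]) ↔
    w.count Step.d + w.count Step.h = N ∧ q + w.count Step.u = w.count Step.d ∧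
      ∀ i : ℕ, (w.take i).count Step.d ≤ q + (w.take i).count Step.u := by
  induction w with
  | nil => intro N q; simp [Gw]; omega
  | cons s w ih =>
    intro N q
    rw [all_take_cons s w (fun l => l.count Step.d ≤ q + l.count Step.u)]
    cases s with
    | u =>
      simp only [List.cons_append, Gw, ih]
      simp [List.count_cons]
      have e : ∀ x y, q + (x + 1) = y ↔ q + 1 + x = y := by intros; omega
      have e' : ∀ x y, y ≤ q + (x + 1) ↔ y ≤ q + 1 + x := by intros; omega
      simp only [e, e']
      simp
    | d =>
      cases N with
      | zero =>
        constructor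
        · intro h
          simp only [List.cons_append, Gw] at h
          cases q with
          | zero => cases w <;> simp [Gw] at h
          | succ q => have := Gw_le _ _ _ h; omega
        · rintro ⟨h, -⟩
          simp [List.count_cons] at h
      | succ N =>
        cases q with
        | zero =>
          constructor
          · intro h
            simp only [List.cons_append, Gw] at h
            cases w <;> simp [Gw] at h
          · rintro ⟨-, -, -, h⟩
            have := h 0
            simp at this
        | succ q =>
          simp only [List.cons_append, Gw, ih]
          simp [List.count_cons]
          have e : ∀ x y, q + 1 + x = y + 1 ↔ q + x = y := by intros; omega
          have e' : ∀ x y, y < q + 1 + x ↔ y ≤ q + x := by intros; omega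
          have e'' : ∀ x y, x + 1 + y = N + 1 ↔ x + y = N := by intros; omega
          simp only [e, e', e'']
    | h =>
      cases N with
      | zero =>
        constructor
        · intro h
          simp only [List.cons_append, Gw] at h
          have := Gw_le _ _ _ h; omega
        · rintro ⟨h, -⟩
          simp [List.count_cons] at h
      | succ N =>
        simp only [List.cons_append, Gw, ih]
        simp [List.count_cons]
        have e'' : ∀ x y, x + (y + 1) = N + 1 ↔ x + y = N := by intros; omega
        simp only [e'']
        simp +contextual

theorem mem_pathSet_iff (m j : ℕ) (w : List Step) :
    w ∈ pathSet m j ↔ w ++ [Step.d] ∈ FPw (m + j + 1) 1 ∧ w.count Step.h = j := by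
  rw [mem_FPw, Gw_append w (m + j) 0]
  simp only [pathSet, IsNonneg, Set.mem_ofPred_eq, zero_add]
  constructor
  · rintro ⟨h1, h2, h3, h4⟩
    exact ⟨⟨by omega, by omega, h4⟩, h3⟩
  · rintro ⟨⟨h1, h2, h4⟩, h3⟩
    exact ⟨by omega, by omega, h3, h4⟩

theorem uRuns_d (w : List Step) : uRuns (Step.d :: w) = uRuns w := by
  simp [uRuns, runs]

theorem uRuns_h (w : List Step) : uRuns (Step.h :: w) = uRuns w := by
  simp [uRuns, runs]

theorem uRuns_ud (w : List Step) : uRuns (Step.u :: Step.d :: w) = 1 :: uRuns w := by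
  simp [uRuns, runs]

theorem uRuns_uh (w : List Step) : uRuns (Step.u :: Step.h :: w) = 1 :: uRuns w := by
  simp [uRuns, runs]

theorem uRuns_uu (w : List Step) (a : ℕ) (r : List ℕ) (h : uRuns (Step.u :: w) = a :: r) :
    uRuns (Step.u :: Step.u :: w) = (a + 1) :: r := by
  unfold uRuns at *
  rw [runs, h]
  simp [add_comm]

theorem uRuns_u_ne (w : List Step) : ∃ a r, uRuns (Step.u :: w) = (a + 1) :: r := by
  induction w with
  | nil => exact ⟨0, [], by simp [uRuns, runs]⟩
  | cons s w ih =>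
    cases s with
    | u =>
      obtain ⟨a, r, h⟩ := ih
      exact ⟨a + 1, r, uRuns_uu _ _ _ h⟩
    | d => exact ⟨0, _, uRuns_ud w⟩
    | h => exact ⟨0, _, uRuns_uh w⟩

theorem uRuns_rep_d (a : ℕ) (w : List Step) :
    uRuns (List.replicate (a + 1) Step.u ++ Step.d :: w) = (a + 1) :: uRuns w := by
  induction a with
  | zero => simp [uRuns_ud]
  | succ a ih =>
    rw [List.replicate_succ, List.replicate_succ]
    exact uRuns_uu _ _ _ ih

theorem uRuns_rep_h (a : ℕ) (w : List Step) :
    uRuns (List.replicate (a + 1) Step.u ++ Step.h :: w) = (a + 1) :: uRuns w := by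
  induction a with
  | zero => simp [uRuns_uh]
  | succ a ih =>
    rw [List.replicate_succ, List.replicate_succ]
    exact uRuns_uu _ _ _ ih

theorem uRuns_append_d (w : List Step) : uRuns (w ++ [Step.d]) = uRuns w := by
  induction w with
  | nil => simp [uRuns, runs]
  | cons s w ih =>
    cases s with
    | d => simpa [uRuns_d] using ih
    | h => simpa [uRuns_h] using ih
    | u =>
      cases w with
      | nil => simp [uRuns, runs]
      | cons s w =>
        cases s with
        | u =>
          obtain ⟨a, r, h⟩ := uRuns_u_ne w
          rw [uRuns_uu _ _ _ h]
          rw [h] at ih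
          exact uRuns_uu _ _ _ ih
        | d =>
          simp only [List.cons_append, uRuns_ud, uRuns_d] at *
          rw [ih]
        | h =>
          simp only [List.cons_append, uRuns_uh, uRuns_h] at *
          rw [ih]

theorem uRuns_sum (w : List Step) : (uRuns w).sum = w.count Step.u ∧ ∀ x ∈ uRuns w, 1 ≤ x := by
  induction w with
  | nil => simp [uRuns, runs]
  | cons s w ih =>
    cases s with
    | d => simpa [uRuns_d] using ih
    | h => simpa [uRuns_h] using ih
    | u =>
      cases w with
      | nil => simp [uRuns, runs]
      | cons s w =>
        cases s with
        | u =>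
          obtain ⟨a, r, h⟩ := uRuns_u_ne w
          rw [uRuns_uu _ _ _ h]
          rw [h] at ih
          simp at ih ⊢
          exact ⟨by omega, ih.2⟩
        | d =>
          simp only [uRuns_ud, uRuns_d] at *
          simp at ih ⊢
          exact ⟨by omega, ih.2⟩
        | h =>
          simp only [uRuns_uh, uRuns_h] at *
          simp at ih ⊢
          exact ⟨by omega, ih.2⟩

def wtw (t : ℕ → ℚ) (w : List Step) : ℚ := ((uRuns w).map t).prod

theorem wtw_eq (t : ℕ → ℚ) (m : ℕ) (w : List Step) (h : w.count Step.u = m) :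
    ∏ i ∈ Finset.Icc 1 m, t i ^ alpha i w = wtw t w := by
  unfold wtw alpha
  rw [Finset.prod_list_map_count]
  symm
  apply Finset.prod_subset
  · intro x hx
    rw [List.mem_toFinset] at hx
    obtain ⟨h1, h2⟩ := uRuns_sum w
    rw [Finset.mem_Icc]
    exact ⟨h2 x hx, by rw [← h, ← h1]; exact List.le_sum_of_mem hx⟩
  · intro x _ hx
    rw [List.mem_toFinset] at hx
    rw [List.count_eq_zero_of_not_mem hx, pow_zero]


def Tw (t : ℕ → ℚ) (a : ℕ) : ℚ := if a = 0 then 1 else t a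

theorem wtw_rep_d (t : ℕ → ℚ) (a : ℕ) (w : List Step) :
    wtw t (List.replicate a Step.u ++ Step.d :: w) = Tw t a * wtw t w := by
  cases a with
  | zero => simp [wtw, uRuns_d, Tw]
  | succ a => simp [wtw, uRuns_rep_d, Tw]

theorem wtw_rep_h (t : ℕ → ℚ) (a : ℕ) (w : List Step) :
    wtw t (List.replicate a Step.u ++ Step.h :: w) = Tw t a * wtw t w := by
  cases a with
  | zero => simp [wtw, uRuns_h, Tw]
  | succ a => simp [wtw, uRuns_rep_h, Tw]

theorem rep_inj (s s' : Step) (hs : s ≠ Step.u) (hs' : s' ≠ Step.u) (a a' : ℕ) (w w' : List Step)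
    (h : List.replicate a Step.u ++ s :: w = List.replicate a' Step.u ++ s' :: w') :
    a = a' ∧ s = s' ∧ w = w' := by
  induction a generalizing a' with
  | zero =>
    cases a' with
    | zero => simpa using h
    | succ a' => simp [List.replicate_succ] at h; exact absurd h.1 hs
  | succ a ih =>
    cases a' with
    | zero => simp [List.replicate_succ] at h; exact absurd h.1.symm hs'
    | succ a' =>
      simp only [List.replicate_succ, List.cons_append, List.cons.injEq, true_and] at h
      have := ih a' h
      exact ⟨by omega, this.2⟩

noncomputable def Wsum (t : ℕ → ℚ) (N q : ℕ) : Polynomial ℚ :=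
  ∑ w ∈ FPw N q, Polynomial.monomial (w.count Step.h) (wtw t w)

theorem Wsum_succ (t : ℕ → ℚ) (N q : ℕ) : Wsum t (N + 1) (q + 1) =
    ∑ a ∈ range (N + 1), Polynomial.C (Tw t a) * Wsum t N (q + a) +
    ∑ a ∈ range N, Polynomial.X * Polynomial.C (Tw t a) * Wsum t N (q + 1 + a) := by
  unfold Wsum
  rw [FPw, Finset.sum_union, Finset.sum_biUnion, Finset.sum_biUnion]
  · congr 1
    · apply Finset.sum_congr rfl
      intro a _
      rw [Finset.sum_image, Finset.mul_sum]
      · apply Finset.sum_congr rfl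
        intro w _
        rw [wtw_rep_d, Polynomial.C_mul_monomial]
        simp [List.count_append, List.count_replicate]
      · intro w _ w' _ h
        exact (rep_inj _ _ (by simp) (by simp) _ _ _ _ h).2.2
    · apply Finset.sum_congr rfl
      intro a _
      rw [Finset.sum_image, Finset.mul_sum]
      · apply Finset.sum_congr rfl
        intro w _
        rw [wtw_rep_h, mul_assoc, Polynomial.C_mul_monomial, Polynomial.X_mul_monomial]
        simp [List.count_append, List.count_replicate]
      · intro w _ w' _ h
        exact (rep_inj _ _ (by simp) (by simp) _ _ _ _ h).2.2
  · intro a _ b _ hab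
    rw [Function.onFun, Finset.disjoint_left]
    intro x hx hy
    rw [mem_image] at hx hy
    obtain ⟨w, _, rfl⟩ := hx
    obtain ⟨w', _, h⟩ := hy
    exact hab (rep_inj _ _ (by simp) (by simp) _ _ _ _ h).1.symm
  · intro a _ b _ hab
    rw [Function.onFun, Finset.disjoint_left]
    intro x hx hy
    rw [mem_image] at hx hy
    obtain ⟨w, _, rfl⟩ := hx
    obtain ⟨w', _, h⟩ := hy
    exact hab (rep_inj _ _ (by simp) (by simp) _ _ _ _ h).1.symm
  · rw [Finset.disjoint_left]
    intro x hx hy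
    simp only [mem_biUnion, mem_image] at hx hy
    obtain ⟨a, _, w, _, rfl⟩ := hx
    obtain ⟨b, _, w', _, h⟩ := hy
    have := (rep_inj _ _ (by simp) (by simp) _ _ _ _ h).2.1
    simp at this

noncomputable def psiw (t : ℕ → ℚ) : (Polynomial ℚ)⟦X⟧ :=
  PowerSeries.map Polynomial.C (PowerSeries.mk (Tw t)) *
    (1 + PowerSeries.C (Polynomial.X : Polynomial ℚ) * X)

theorem psiw_zero (t : ℕ → ℚ) : coeff 0 (psiw t) = Polynomial.C (Tw t 0) := by
  rw [psiw, mul_add, mul_one, ← mul_assoc, map_add, coeff_zero_mul_X, coeff_map, coeff_mk, add_zero]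

theorem psiw_succ (t : ℕ → ℚ) (b : ℕ) : coeff (b + 1) (psiw t) =
    Polynomial.C (Tw t (b + 1)) + Polynomial.X * Polynomial.C (Tw t b) := by
  rw [psiw, mul_add, mul_one, ← mul_assoc, map_add, coeff_succ_mul_X, coeff_mul_C, coeff_map, coeff_map,
    coeff_mk, coeff_mk, mul_comm]

theorem Wsum_cycle (t : ℕ → ℚ) (N q c : ℕ) (h : q + c = N) :
    (N : Polynomial ℚ) * Wsum t N q = q * coeff c (psiw t ^ N) := by
  refine cycle_aux (psiw t) (Wsum t) ?_ ?_ ?_ ?_ N q c h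
  · intro N q h
    unfold Wsum
    apply Finset.sum_eq_zero
    intro w hw
    have := Gw_le _ _ _ ((mem_FPw _ _ _).1 hw)
    omega
  · simp [Wsum, FPw, wtw, uRuns, runs]
  · intro N; simp [Wsum, FPw]
  · intro N q
    rw [Wsum_succ, Finset.sum_range_succ', Finset.sum_range_succ', psiw_zero]
    simp only [psiw_succ, add_mul, Finset.sum_add_distrib]
    simp only [add_assoc, add_comm 1]
    ring

theorem coeff_psiw (t : ℕ → ℚ) (m j N : ℕ) : (coeff (m + j) (psiw t ^ N)).coeff j =
    (N.choose j : ℚ) * coeff m (PowerSeries.mk (Tw t) ^ N) := by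
  have hb : ∀ k, coeff k ((1 + PowerSeries.C (Polynomial.X : Polynomial ℚ) * X) ^ N) =
      (N.choose k : Polynomial ℚ) * Polynomial.X ^ k := by
    intro k
    rw [add_comm, add_pow, map_sum]
    have : ∀ i ∈ range (N + 1), coeff k ((PowerSeries.C (Polynomial.X : Polynomial ℚ) * X) ^ i *
        1 ^ (N - i) * (N.choose i : (Polynomial ℚ)⟦X⟧)) =
        if k = i then (N.choose k : Polynomial ℚ) * Polynomial.X ^ k else 0 := by
      intro i _
      rw [one_pow, mul_one, mul_pow, ← map_pow, ← map_natCast (PowerSeries.C (R := Polynomial ℚ)),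
        coeff_mul_C, coeff_C_mul, coeff_X_pow]
      split_ifs with h
      · subst h; ring
      · simp
    rw [Finset.sum_congr rfl this, Finset.sum_ite_eq]
    split_ifs with h
    · rfl
    · rw [Nat.choose_eq_zero_of_lt (by simpa using h)]; simp
  rw [psiw, mul_pow, ← map_pow, coeff_mul]
  simp only [hb, coeff_map]
  rw [Polynomial.finsetSum_coeff, Finset.sum_eq_single (m, j)]
  · simp only [Polynomial.coeff_C_mul]
    rw [← map_natCast (Polynomial.C (R := ℚ)), Polynomial.coeff_C_mul]
    simp [mul_comm]
  · rintro ⟨a, b⟩ hp hne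
    rw [HasAntidiagonal.mem_antidiagonal] at hp
    simp only [Polynomial.coeff_C_mul]
    rw [← map_natCast (Polynomial.C (R := ℚ)), Polynomial.coeff_C_mul, Polynomial.coeff_X_pow,
      if_neg]
    · simp
    · rintro rfl
      apply hne
      simp at hp
      simp [hp]
  · intro h; simp at h

theorem bell_coeff (t : ℕ → ℚ) (m r : ℕ) :
    coeff m ((PowerSeries.mk (Tw t) - 1) ^ r) = bellNorm m r t := by
  set S : ℚ⟦X⟧ := PowerSeries.mk (Tw t) - 1 with hS
  have htr : PowerSeries.trunc (m + 1) S =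
      ∑ i : Fin m, Polynomial.monomial ((i : ℕ) + 1) (t ((i : ℕ) + 1)) := by
    rw [← Finset.sum_range (fun i => Polynomial.monomial (i + 1) (t (i + 1)))]
    ext n
    rw [PowerSeries.coeff_trunc, Polynomial.finsetSum_coeff]
    simp only [Polynomial.coeff_monomial]
    cases n with
    | zero => simp [hS, Tw]
    | succ n => simp [hS, Tw, PowerSeries.coeff_one]
  have h1 : coeff m (S ^ r) = ((PowerSeries.trunc (m + 1) S) ^ r).coeff m := by
    have := congrArg (fun p => p.coeff m) (PowerSeries.trunc_trunc_pow S (m + 1) r)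
    simp only [PowerSeries.coeff_trunc, Nat.lt_succ_self, if_true] at this
    rw [← this, ← Polynomial.coe_pow, Polynomial.coeff_coe]
  rw [h1, htr, Finset.sum_pow_eq_sum_piAntidiag, Polynomial.finsetSum_coeff]
  have h2 : ∀ k ∈ piAntidiag (univ : Finset (Fin m)) r,
      ((Nat.multinomial univ k : Polynomial ℚ) *
        ∏ i : Fin m, (Polynomial.monomial ((i : ℕ) + 1) (t ((i : ℕ) + 1))) ^ k i).coeff m =
      if ∑ i : Fin m, ((i : ℕ) + 1) * k i = m then
        (r.factorial : ℚ) / (∏ i : Fin m, ((k i).factorial : ℚ)) *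
          ∏ i : Fin m, t ((i : ℕ) + 1) ^ k i else 0 := by
    intro k hk
    rw [mem_piAntidiag] at hk
    have hprod : ∏ i : Fin m, (Polynomial.monomial ((i : ℕ) + 1) (t ((i : ℕ) + 1))) ^ k i =
        Polynomial.monomial (∑ i : Fin m, ((i : ℕ) + 1) * k i)
          (∏ i : Fin m, t ((i : ℕ) + 1) ^ k i) := by
      simp only [Polynomial.monomial_pow]
      induction (univ : Finset (Fin m)) using Finset.induction_on with
      | empty => simp
      | insert a s ha ih =>
        rw [Finset.prod_insert ha, Finset.sum_insert ha, Finset.prod_insert ha, ih,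
          Polynomial.monomial_mul_monomial]
    rw [hprod, ← map_natCast (Polynomial.C (R := ℚ)), Polynomial.coeff_C_mul,
      Polynomial.coeff_monomial]
    have hmul := Nat.multinomial_spec (univ : Finset (Fin m)) k
    rw [hk.1] at hmul
    have hne : (∏ i : Fin m, ((k i).factorial : ℚ)) ≠ 0 :=
      Finset.prod_ne_zero_iff.2 (fun i _ => by exact_mod_cast Nat.factorial_ne_zero _)
    have hmul' : (∏ i : Fin m, ((k i).factorial : ℚ)) * (Nat.multinomial univ k : ℚ) =
        r.factorial := by exact_mod_cast hmul
    split_ifs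
    · rw [← hmul']; field_simp
    · simp
  rw [Finset.sum_congr rfl h2, bellNorm, ← Finset.sum_filter, ← Finset.sum_filter]
  symm
  refine Finset.sum_bij (fun f _ => fun i => (f i : ℕ)) ?_ ?_ ?_ ?_
  · intro f hf
    simp at hf ⊢
    exact hf
  · intro f _ g _ h
    funext i
    exact Fin.ext (congrFun h i)
  · intro k hk
    simp at hk
    have hle : ∀ i, k i < m + 1 := by
      intro i
      have h3 : ((i : ℕ) + 1) * k i ≤ ∑ i : Fin m, ((i : ℕ) + 1) * k i :=
        Finset.single_le_sum (f := fun i : Fin m => ((i : ℕ) + 1) * k i)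
          (fun _ _ => Nat.zero_le _) (mem_univ i)
      nlinarith [hk.2, Nat.zero_le ((i : ℕ) * k i)]
    refine ⟨fun i => ⟨k i, hle i⟩, ?_, rfl⟩
    simp
    exact hk
  · intro f _; rfl

theorem coeff_T_pow (t : ℕ → ℚ) (m M : ℕ) (h : m ≤ M) :
    coeff m (PowerSeries.mk (Tw t) ^ M) =
      ∑ r ∈ range (m + 1), (M.choose r : ℚ) * bellNorm m r t := by
  have e : PowerSeries.mk (Tw t) = (PowerSeries.mk (Tw t) - 1) + 1 := by ring
  rw [e, add_pow, map_sum]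
  have : ∀ r ∈ range (M + 1), coeff m ((PowerSeries.mk (Tw t) - 1) ^ r * 1 ^ (M - r) *
      (M.choose r : ℚ⟦X⟧)) = (M.choose r : ℚ) * bellNorm m r t := by
    intro r _
    rw [one_pow, mul_one, ← map_natCast (PowerSeries.C (R := ℚ)), coeff_mul_C, bell_coeff, mul_comm]
  rw [Finset.sum_congr rfl this]
  symm
  apply Finset.sum_subset
  · intro a; simp; omega
  · intro r _ hr
    rw [← bell_coeff, PowerSeries.coeff_of_lt_order, mul_zero]
    have h0 : (1 : ℕ∞) ≤ (PowerSeries.mk (Tw t) - 1).order := by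
      rw [PowerSeries.one_le_order_iff_constCoeff_eq_zero]
      rw [← PowerSeries.coeff_zero_eq_constantCoeff_apply, map_sub, coeff_mk]
      simp [Tw]
    have h1 := PowerSeries.le_order_pow_of_constantCoeff_eq_zero r
      ((PowerSeries.one_le_order_iff_constCoeff_eq_zero).1 h0)
    refine lt_of_lt_of_le ?_ h1
    simp at hr
    exact_mod_cast hr

theorem path_sum (t : ℕ → ℚ) (m j : ℕ) :
    (∑ᶠ w ∈ pathSet m j, ∏ i ∈ Finset.Icc 1 m, t i ^ alpha i w) =
      (Wsum t (m + j + 1) 1).coeff j := by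
  rw [Wsum, Polynomial.finsetSum_coeff]
  simp only [Polynomial.coeff_monomial]
  rw [← Finset.sum_filter, ← finsum_mem_coe_finset]
  refine finsum_mem_eq_of_bijOn (fun w => w ++ [Step.d]) ⟨?_, ?_, ?_⟩ ?_
  · intro w hw
    rw [mem_pathSet_iff] at hw
    simp [hw]
  · intro w _ w' _ h
    simpa using h
  · intro w hw
    simp only [coe_filter, Set.mem_ofPred_eq] at hw
    obtain ⟨w', rfl⟩ := Gw_last w _ _ ((mem_FPw _ _ _).1 hw.1) (by
      rintro rfl
      have := (mem_FPw _ _ _).1 hw.1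
      simp [Gw] at this)
    refine ⟨w', ?_, rfl⟩
    rw [mem_pathSet_iff]
    exact ⟨hw.1, by simpa using hw.2⟩
  · intro w hw
    rw [wtw_eq t m w hw.1, wtw, wtw, uRuns_append_d]

end helpers

theorem stmt1 (k j m : ℕ) (hm : 1 ≤ m) (t : ℕ → ℚ) :
    (∑ᶠ w ∈ pathSet m j, ∏ i ∈ Finset.Icc 1 m, t i ^ alpha i w) =
      (1 : ℚ) / (m + 1) * Nat.choose (m + j) m *
        ∑ r ∈ Finset.range (m + 1), (Nat.choose (m + j + 1) r : ℚ) * bellNorm m r t := by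
  rw [path_sum]
  have h1 := Wsum_cycle t (m + j + 1) 1 (m + j) (by ring)
  have h2 := congrArg (fun p => p.coeff j) h1
  rw [Nat.cast_one, one_mul] at h2
  rw [coeff_psiw, coeff_T_pow t m _ (by omega),
    ← map_natCast (Polynomial.C (R := ℚ)), Polynomial.coeff_C_mul] at h2
  set B := ∑ r ∈ Finset.range (m + 1), (Nat.choose (m + j + 1) r : ℚ) * bellNorm m r t
  have h3 : ((m + j + 1 : ℕ) : ℚ) * (m + j).choose m = (m + j + 1).choose j * (m + 1) := by
    have := Nat.add_one_mul_choose_eq (m + j) m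
    rw [show (m + j + 1).choose (m + 1) = (m + j + 1).choose j from by
      rw [← Nat.choose_symm (by omega : j ≤ m + j + 1)]; congr 1; omega] at this
    exact_mod_cast this
  have hm1 : (m : ℚ) + 1 ≠ 0 := by positivity
  have hN : ((m + j + 1 : ℕ) : ℚ) ≠ 0 := by positivity
  apply mul_left_cancel₀ hN
  rw [h2]
  field_simp
  linear_combination (-B) * h3
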